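/- Let (x^n) be generated by the iPiano update x^{n+1} = prox_{α_n g}(x^n − α_n ∇f(x^n) + β_n(x^n − x^{n-1})) with β_n ∈ [0,1) and α_n ≥ c₁ > 0 with c₁ ≤ 1. Then for each n, ‖x^{n+1} − x^n‖ ≥ c₁‖r(x^n)‖ − ‖x^n − x^{n-1}‖, where r(x) = x − prox_g(x − ∇f(x)) is the proximal residual at step size 1. -/

import Mathlib

open RealInnerProductSpace

variable {N : ℕ}

/-- `p` is the proximal point of `g` with parameter `α > 0` at `w`, i.e. a minimizer of
`x ↦ ‖x - w‖²/2 + α g x`. -/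
def IsProxPt (g : EuclideanSpace ℝ (Fin N) → EReal) (α : ℝ)
    (w p : EuclideanSpace ℝ (Fin N)) : Prop :=
  ∀ x, ((‖p - w‖ ^ 2 / 2 : ℝ) : EReal) + (α : EReal) * g p
      ≤ ((‖x - w‖ ^ 2 / 2 : ℝ) : EReal) + (α : EReal) * g x

/-- A proximal point has finite value. -/
theorem prox_ne_top (g : EuclideanSpace ℝ (Fin N) → EReal)
    (hproper : ∃ z, g z ≠ ⊤) (hnobot : ∀ z, g z ≠ ⊥) (α : ℝ) (hα : 0 < α)
    (w p : EuclideanSpace ℝ (Fin N)) (h : IsProxPt g α w p) : g p ≠ ⊤ := by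
  intro htop
  obtain ⟨z, hz⟩ := hproper
  have h1 := h z
  rw [htop, EReal.coe_mul_top_of_pos hα, EReal.coe_add_top] at h1
  obtain ⟨r, hr⟩ : ∃ r : ℝ, g z = r := ⟨(g z).toReal, (EReal.coe_toReal hz (hnobot z)).symm⟩
  rw [hr, ← EReal.coe_mul, ← EReal.coe_add, top_le_iff] at h1
  exact EReal.coe_ne_top _ h1

/-- First-order optimality (variational inequality) of a proximal point. -/
theorem prox_var_ineq (g : EuclideanSpace ℝ (Fin N) → EReal)
    (hconv : ∀ (x y : EuclideanSpace ℝ (Fin N)) (a b : ℝ), 0 ≤ a → 0 ≤ b → a + b = 1 →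
      g (a • x + b • y) ≤ (a : EReal) * g x + (b : EReal) * g y)
    (α : ℝ) (hα : 0 < α)
    (w p z : EuclideanSpace ℝ (Fin N)) (h : IsProxPt g α w p)
    (gp gz : ℝ) (hp : g p = gp) (hz : g z = gz) :
    inner ℝ (w - p) (z - p) ≤ α * (gz - gp) := by
  have key : ∀ t : ℝ, 0 < t → t ≤ 1 →
      inner ℝ (w - p) (z - p) ≤ α * (gz - gp) + t * (‖z - p‖ ^ 2 / 2) := by
    intro t ht ht1
    have h1 := h ((1 - t) • p + t • z)
    have h2 := hconv p z (1 - t) t (by linarith) ht.le (by ring)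
    have h3 : (α : EReal) * g ((1 - t) • p + t • z) ≤
        (α : EReal) * (((1 - t : ℝ) : EReal) * g p + (t : EReal) * g z) :=
      mul_le_mul_of_nonneg_left h2 (by exact_mod_cast hα.le)
    have h4 := h1.trans (add_le_add_right h3 _)
    rw [hp, hz] at h4
    have h5 : ‖p - w‖ ^ 2 / 2 + α * gp ≤
      ‖(1 - t) • p + t • z - w‖ ^ 2 / 2 + α * ((1 - t) * gp + t * gz) := by exact_mod_cast h4
    have h6 : (1 - t) • p + t • z - w = t • (z - p) - (w - p) := by module
    have h7 : ‖p - w‖ = ‖w - p‖ := norm_sub_rev _ _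
    rw [h6, h7, norm_sub_sq_real (t • (z - p)), norm_smul, real_inner_smul_left, Real.norm_eq_abs, mul_pow,
      sq_abs, real_inner_comm (w - p)] at h5
    have h8 : t * inner ℝ (w - p) (z - p) ≤
      t * (α * (gz - gp) + t * (‖z - p‖ ^ 2 / 2)) := by nlinarith
    exact le_of_mul_le_mul_left h8 ht
  refine le_of_forall_pos_le_add fun ε hε => ?_
  set K := ‖z - p‖ ^ 2 / 2 with hK
  have hK0 : 0 ≤ K := by positivity
  have hpos : 0 < ε / (K + ε) := by positivity
  have h1 := key (ε / (K + ε)) hpos (by rw [div_le_one (by positivity)]; linarith)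
  have h2 : ε / (K + ε) * K ≤ ε := by
    rw [div_mul_eq_mul_div, div_le_iff₀ (by positivity)]; nlinarith
  linarith

/-- **Residual bound for one iPiano step.** If
`x^{n+1} = prox_{α_n g}(x^n - α_n ∇f(x^n) + β_n(x^n - x^{n-1}))` with `β_n ∈ [0,1)` and
`α_n ≥ c₁`, `0 < c₁ ≤ 1`, then
`‖x^{n+1} - x^n‖ ≥ c₁‖r(x^n)‖ - ‖x^n - x^{n-1}‖`,
where `r(x) = x - prox_g(x - ∇f x)` is the proximal residual at step size 1, and
`q = prox_g(x^n - ∇f(x^n))`. -/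
theorem ipiano_step_residual_bound
    (f : EuclideanSpace ℝ (Fin N) → ℝ)
    (f' : EuclideanSpace ℝ (Fin N) → EuclideanSpace ℝ (Fin N))
    (hf : ∀ y, HasGradientAt f (f' y) y) (hf' : Continuous f')
    (g : EuclideanSpace ℝ (Fin N) → EReal)
    (hproper : ∃ z, g z ≠ ⊤) (hnobot : ∀ z, g z ≠ ⊥)
    (hlsc : LowerSemicontinuous g)
    (hconv : ∀ (x y : EuclideanSpace ℝ (Fin N)) (a b : ℝ), 0 ≤ a → 0 ≤ b → a + b = 1 →
      g (a • x + b • y) ≤ (a : EReal) * g x + (b : EReal) * g y)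
    (c₁ αn βn : ℝ) (hc₁ : 0 < c₁) (hc₁1 : c₁ ≤ 1) (hαn : c₁ ≤ αn)
    (hβ0 : 0 ≤ βn) (hβ1 : βn < 1)
    (xm1 x0 x1 q : EuclideanSpace ℝ (Fin N))
    -- `x^{n+1}` is the proximal point of the iPiano forward step
    (hx1 : IsProxPt g αn (x0 - αn • f' x0 + βn • (x0 - xm1)) x1)
    -- `q = prox_g(x^n - ∇f(x^n))`, so that `r(x^n) = x^n - q`
    (hq : IsProxPt g 1 (x0 - f' x0) q) :
    c₁ * ‖x0 - q‖ - ‖x0 - xm1‖ ≤ ‖x1 - x0‖ := by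
  have hα : 0 < αn := by linarith
  obtain ⟨a, ha⟩ : ∃ r : ℝ, g x1 = r := ⟨(g x1).toReal, (EReal.coe_toReal
    (prox_ne_top g hproper hnobot αn hα _ _ hx1) (hnobot _)).symm⟩
  obtain ⟨b, hb⟩ : ∃ r : ℝ, g q = r := ⟨(g q).toReal, (EReal.coe_toReal
    (prox_ne_top g hproper hnobot 1 one_pos _ _ hq) (hnobot _)).symm⟩
  have v1 := prox_var_ineq g hconv αn hα _ _ q hx1 a b ha hb
  have v2 := prox_var_ineq g hconv 1 one_pos _ _ x1 hq b a hb ha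
  obtain ⟨d, hd⟩ : ∃ d, d = x1 - x0 := ⟨_, rfl⟩
  obtain ⟨u, hu⟩ : ∃ u, u = q - x1 := ⟨_, rfl⟩
  obtain ⟨m, hm⟩ : ∃ m, m = x0 - xm1 := ⟨_, rfl⟩
  have e1 : x0 - αn • f' x0 + βn • (x0 - xm1) - x1 = βn • m - αn • f' x0 - d := by
    rw [hm, hd]; module
  have e2 : x0 - f' x0 - q = -(f' x0 + (d + u)) := by rw [hd, hu]; module
  have e3 : x1 - q = -u := by rw [hu]; module
  have e4 : x0 - q = -(d + u) := by rw [hd, hu]; module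
  rw [e1, ← hu] at v1
  rw [e2, e3, inner_neg_neg] at v2
  rw [e4, norm_neg, ← hd, ← hm]
  simp only [inner_sub_left, inner_add_left, real_inner_smul_left] at v1 v2
  rw [real_inner_self_eq_norm_sq] at v2
  -- main inequality
  have main : αn * ‖u‖ ^ 2 ≤ (1 - αn) * inner ℝ d u - βn * inner ℝ m u := by
    nlinarith [mul_le_mul_of_nonneg_left v2 hα.le]
  have c1 : |inner ℝ d u| ≤ ‖d‖ * ‖u‖ := abs_real_inner_le_norm d u
  have c2 : |inner ℝ m u| ≤ ‖m‖ * ‖u‖ := abs_real_inner_le_norm m u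
  have c3 : -(βn * inner ℝ m u) ≤ ‖m‖ * ‖u‖ := by
    have := (abs_le.mp c2).1
    have h0 : 0 ≤ ‖m‖ * ‖u‖ := by positivity
    nlinarith
  have tri : ‖d + u‖ ≤ ‖d‖ + ‖u‖ := norm_add_le _ _
  have hE := norm_nonneg (d + u)
  have hD := norm_nonneg d
  have hU := norm_nonneg u
  have hM := norm_nonneg m
  rcases le_total αn 1 with hle | hge
  · have h1 : (αn * ‖u‖) * ‖u‖ ≤ ((1 - αn) * ‖d‖ + ‖m‖) * ‖u‖ := by
      nlinarith [mul_le_mul_of_nonneg_left (abs_le.mp c1).2 (sub_nonneg.mpr hle)]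
    have h2 : αn * ‖u‖ ≤ (1 - αn) * ‖d‖ + ‖m‖ := by
      rcases hU.eq_or_lt with h0 | h0
      · rw [← h0]; nlinarith
      · exact le_of_mul_le_mul_right h1 h0
    nlinarith
  · by_contra! hcon
    have hlt : ‖d‖ + ‖m‖ < ‖d + u‖ := by nlinarith
    have hex : ‖d + u‖ ^ 2 = ‖d‖ ^ 2 + 2 * inner ℝ d u + ‖u‖ ^ 2 := norm_add_sq_real d u
    have hcs : inner ℝ (d + u) d ≤ ‖d + u‖ * ‖d‖ := real_inner_le_norm _ _
    rw [inner_add_left, real_inner_self_eq_norm_sq, real_inner_comm] at hcs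
    have hpos : 0 ≤ inner ℝ d u + ‖u‖ ^ 2 := by
      have hy := mul_nonneg hE (by linarith : 0 ≤ ‖d + u‖ - ‖d‖)
      linarith
    have h1 : ‖u‖ * ‖u‖ ≤ ‖m‖ * ‖u‖ := by
      have hx := mul_nonneg (sub_nonneg.mpr hge) hpos
      linarith
    have hu0 : 0 < ‖u‖ := by linarith
    have := le_of_mul_le_mul_right h1 hu0
    linarith
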